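/- Lemma (from the proof of Theorem 1.1): smooth 3-reflective billiards whose classical borders are supported by lines are right-spherical. Let (a₁,v₁), (a₂,v₂), (a₃,v₃) be a 3-reflective triple of C^∞-smooth line-framed curves in ℝ² with orbit data (Ω, g), such that each image aᵢ(Uᵢ) is contained in a real affine line ℓᵢ, and ℓ₁, ℓ₂, ℓ₃ are pairwise distinct. Then there exist linearly independent vectors p, q, r ∈ ℝ³ and a nonempty open subset Ω′ ⊆ Ω such that for every (s,u) ∈ Ω′, writing t = g(s,u): (a₁(s),1) ∈ span{p,q}, (a₂(u),1) ∈ span{q,r}, (a₃(t),1) ∈ span{r,p}, and r ∈ span{(a₁(s),1),(v₁(s),0)}, p ∈ span{(a₂(u),1),(v₂(u),0)}, q ∈ span{(a₃(t),1),(v₃(t),0)} in ℝ³. -/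

import Mathlib

/-- Two nonzero vectors `u`, `w` of the plane are symmetric with respect to the pair
`(v, τ)` (field direction, tangent direction): there are nonzero scalars `p`, `q` with
`p • u + q • w` on the line spanned by `τ` and `p • u - q • w` on the line spanned by `v`. -/
def PlaneSym (𝕜 : Type*) [Field 𝕜] (v τ u w : 𝕜 × 𝕜) : Prop :=
  ∃ p q : 𝕜, p ≠ 0 ∧ q ≠ 0 ∧ p • u + q • w ∈ Submodule.span 𝕜 {τ} ∧
    p • u - q • w ∈ Submodule.span 𝕜 {v}

/-- Lift of a point of the plane to homogeneous coordinates: `x ↦ (x, 1)`. -/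
def liftPt (𝕜 : Type*) [Field 𝕜] (x : 𝕜 × 𝕜) : 𝕜 × 𝕜 × 𝕜 := (x.1, x.2, 1)

/-- Lift of a direction of the plane to homogeneous coordinates: `x ↦ (x, 0)`. -/
def liftDir (𝕜 : Type*) [Field 𝕜] (x : 𝕜 × 𝕜) : 𝕜 × 𝕜 × 𝕜 := (x.1, x.2, 0)

/-- The affine line through `x` with direction `w`. -/
def lineThru (𝕜 : Type*) [Field 𝕜] (x w : 𝕜 × 𝕜) : Set (𝕜 × 𝕜) :=
  {y | ∃ c : 𝕜, y = x + c • w}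

/-!
In homogeneous coordinates the reflection law at `A` says that the field line through `A` contains
`l(C) • B + l(B) • C`, where `l` is a linear form vanishing on the border through `A`
(`ReflectsAt`). Let `l`, `m`, `n` be the forms of the three borders.

If they are independent, the law gives `1 - α(s) β(t) γ(s, t) = μ(s) β(t) = ν(t) γ(s, t)` for
`α = n(A)/m(A)`, `β = l(B)/n(B)`, `γ = m(C)/l(C)`, where `μ` and `ν` measure how far the field lines
at `A` and `B` miss the opposite vertices of the triangle formed by the borders. As `α` and `β` are
not constant, this forces `α β γ = 1`, so every field line passes through the opposite vertex.

If they are dependent, rescale to `l + m + n = 0` and take a form `θ` independent of `l`, `m`. In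
the coordinates `ξ = θ(A)/m(A)`, `η = θ(B)/n(B)`, `ζ = θ(C)/l(C)` of the vertices on their borders,
the law says that `ζ - η`, `ξ - ζ`, `η - ξ` depend only on `A`, `B`, `C` respectively. Hence
`ζ = ξ + η + const`, and two orbits with equal `ξ + η` but different `η - ξ` have the same vertex
`C`, a contradiction.
-/

open Module

section LinearForms

variable {𝕜 E : Type*} [Field 𝕜] [AddCommGroup E] [Module 𝕜 E]

theorem exists_basis_coord_eq {ι : Type*} [Fintype ι] [Nonempty ι] {f : ι → Dual 𝕜 E}
    (hf : LinearIndependent 𝕜 f) (hcard : Fintype.card ι = finrank 𝕜 E) :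
    ∃ b : Basis ι 𝕜 E, ∀ i, b.coord i = f i := by
  classical
  have : FiniteDimensional 𝕜 E := .of_finrank_pos (hcard ▸ Fintype.card_pos)
  let c := basisOfLinearIndependentOfCardEqFinrank hf (hcard.trans Subspace.dual_finrank_eq.symm)
  refine ⟨c.dualBasis.map (evalEquiv 𝕜 E).symm, fun i => LinearMap.ext fun x => ?_⟩
  simp [c]

theorem exists_dual_frame {l m n : Dual 𝕜 E} (h : LinearIndependent 𝕜 ![l, m, n])
    (hE : finrank 𝕜 E = 3) :
    ∃ P Q R : E, LinearIndependent 𝕜 ![P, Q, R] ∧ ∀ x, l x • P + m x • Q + n x • R = x := by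
  obtain ⟨b, hb⟩ := exists_basis_coord_eq h (by rw [Fintype.card_fin, hE])
  refine ⟨b 0, b 1, b 2, ?_, fun x => ?_⟩
  · convert b.linearIndependent using 1
    ext i
    fin_cases i <;> rfl
  · have hx := b.sum_repr x
    rwa [Fin.sum_univ_three, ← b.coord_apply, ← b.coord_apply, ← b.coord_apply, hb, hb, hb] at hx

theorem linearIndependent_pair_of_apply {l m : Dual 𝕜 E} {A B : E} (hlA : l A = 0)
    (hmA : m A ≠ 0) (hmB : m B = 0) (hlB : l B ≠ 0) : LinearIndependent 𝕜 ![l, m] := by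
  refine LinearIndependent.pair_iff.2 fun s t h => ⟨?_, ?_⟩
  · simpa [hmB, hlB] using LinearMap.congr_fun h B
  · simpa [hlA, hmA] using LinearMap.congr_fun h A

theorem exists_separating_form {l m : Dual 𝕜 E} (h : LinearIndependent 𝕜 ![l, m])
    (hE : finrank 𝕜 E = 3) :
    ∃ θ : Dual 𝕜 E, ∀ x, l x = 0 → m x = 0 → θ x = 0 → x = 0 := by
  obtain ⟨θ, hθ⟩ := exists_linearIndependent_cons_of_lt_finrank h
    (by rw [Subspace.dual_finrank_eq, hE]; norm_num)
  obtain ⟨P, Q, R, -, hx⟩ := exists_dual_frame (l := θ) hθ hE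
  exact ⟨θ, fun x hl hm hθ => by simpa [hl, hm, hθ] using (hx x).symm⟩

theorem div_ne_div_of_linearIndependent {l m θ : Dual 𝕜 E}
    (hsep : ∀ x, l x = 0 → m x = 0 → θ x = 0 → x = 0) {A A' : E}
    (hAA' : LinearIndependent 𝕜 ![A, A']) (hA : l A = 0) (hA' : l A' = 0) (hmA : m A ≠ 0)
    (hmA' : m A' ≠ 0) : θ A / m A ≠ θ A' / m A' := by
  intro h
  rw [div_eq_div_iff hmA hmA'] at h
  have hzero : m A' • A + (-m A) • A' = 0 := by
    apply hsep <;> simp only [map_add, map_smul, smul_eq_mul, hA, hA']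
    · ring
    · ring
    · linear_combination h
  exact hmA' (LinearIndependent.pair_iff.1 hAA' _ _ hzero).1

end LinearForms

section ReflectiveTriangles

variable {𝕜 E : Type*} [Field 𝕜] [AddCommGroup E] [Module 𝕜 E]

/-- The reflection law in homogeneous coordinates: `A` lies on the line `l = 0`, the points `B`, `C`
and the field vector `X` do not, and the field line through `A` and `X` contains
`l C • B + l B • C`. The last condition is `formula`, in which the factor relating `X` to that
vector and the multiple of `A` have been eliminated by means of `l`. -/
structure ReflectsAt (l : Dual 𝕜 E) (A B C X : E) : Prop where
  vertex : l A = 0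
  left : l B ≠ 0
  right : l C ≠ 0
  field : l X ≠ 0
  formula (f : Dual 𝕜 E) :
    2 * l B * l C * f X = l X * (l C * f B + l B * f C - (l B + l C) * f A)

/-- Applying `l` to the tangent condition gives `p : q = l C : -l B`, so the field direction is that
of `l C • (B - A) + l B • (C - A)`. -/
theorem ReflectsAt.of_harmonic [NeZero (2 : 𝕜)] {l : Dual 𝕜 E} {A B C X τ : E} (hA : l A = 0)
    (hτ : l τ = 0) (hB : l B ≠ 0) {p q : 𝕜} (hp : p ≠ 0)
    (hadd : p • (B - A) + q • (C - A) ∈ Submodule.span 𝕜 {τ})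
    (hsub : p • (B - A) - q • (C - A) ∈ Submodule.span 𝕜 {X}) : ReflectsAt l A B C X := by
  obtain ⟨c, hc⟩ := Submodule.mem_span_singleton.1 hadd
  obtain ⟨d, hd⟩ := Submodule.mem_span_singleton.1 hsub
  have hsub_apply (f : Dual 𝕜 E) : d * f X = p * (f B - f A) - q * (f C - f A) := by
    simpa using congrArg f hd
  have hadd_l : p * l B + q * l C = 0 := by simpa [hA, hτ, eq_comm] using congrArg l hc
  have hX : d * l X = 2 * (p * l B) := by linear_combination hsub_apply l - hadd_l + (q - p) * hA
  have hX_ne : d * l X ≠ 0 := hX ▸ mul_ne_zero two_ne_zero (mul_ne_zero hp hB)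
  refine ⟨hA, hB, fun hC => mul_ne_zero hp hB (by simpa [hC] using hadd_l),
    right_ne_zero_of_mul hX_ne, fun f => mul_left_cancel₀ (left_ne_zero_of_mul hX_ne) ?_⟩
  linear_combination 2 * l B * l C * hsub_apply f - 2 * l B * (f C - f A) * hadd_l
    - (l C * f B + l B * f C - (l B + l C) * f A) * hX

theorem ReflectsAt.symm {l : Dual 𝕜 E} {A B C X : E} (h : ReflectsAt l A B C X) :
    ReflectsAt l A C B X :=
  ⟨h.vertex, h.right, h.left, h.field, fun f => by linear_combination h.formula f⟩

theorem ReflectsAt.smul {l : Dual 𝕜 E} {A B C X : E} (h : ReflectsAt l A B C X) {c : 𝕜}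
    (hc : c ≠ 0) : ReflectsAt (c • l) A B C X where
  vertex := by simp [h.vertex]
  left := by simp [hc, h.left]
  right := by simp [hc, h.right]
  field := by simp [hc, h.field]
  formula f := by
    simp only [LinearMap.smul_apply, smul_eq_mul]
    linear_combination c ^ 2 * h.formula f

/-- A triangular orbit `A B C` with its vertices on the lines `l = 0`, `m = 0`, `n = 0`, satisfying
the reflection law at them with field vectors `X`, `Y`, `Z`. The order is chosen so that the notion
is invariant under rotation. -/
structure IsReflectiveTriangle (l m n : Dual 𝕜 E) (A B C X Y Z : E) : Prop where
  vertexA : ReflectsAt l A B C X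
  vertexB : ReflectsAt m B C A Y
  vertexC : ReflectsAt n C A B Z

namespace IsReflectiveTriangle

variable {l m n : Dual 𝕜 E} {A B C X Y Z : E}

theorem rotate (h : IsReflectiveTriangle l m n A B C X Y Z) :
    IsReflectiveTriangle m n l B C A Y Z X :=
  ⟨h.vertexB, h.vertexC, h.vertexA⟩

theorem smul (h : IsReflectiveTriangle l m n A B C X Y Z) {a b c : 𝕜} (ha : a ≠ 0) (hb : b ≠ 0)
    (hc : c ≠ 0) : IsReflectiveTriangle (a • l) (b • m) (c • n) A B C X Y Z :=
  ⟨h.vertexA.smul ha, h.vertexB.smul hb, h.vertexC.smul hc⟩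

theorem exists_smul_add_add_smul_eq_zero (h : IsReflectiveTriangle l m n A B C X Y Z)
    (hdep : ¬ LinearIndependent 𝕜 ![m, n, l]) :
    ∃ a c : 𝕜, a ≠ 0 ∧ c ≠ 0 ∧ a • l + m + c • n = 0 := by
  have hnl : LinearIndependent 𝕜 ![n, l] :=
    linearIndependent_pair_of_apply h.vertexC.vertex h.vertexA.right h.vertexA.vertex
      h.vertexC.left
  have hm : m ∈ Submodule.span 𝕜 {n, l} := by
    by_contra hm
    refine hdep (linearIndependent_finCons.2 ⟨hnl, ?_⟩)
    rwa [Matrix.range_cons_cons_empty]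
  obtain ⟨c, a, rfl⟩ := Submodule.mem_span_pair.1 hm
  have hmC := h.vertexB.left
  have hmA := h.vertexB.right
  simp only [LinearMap.add_apply, LinearMap.smul_apply, smul_eq_mul, h.vertexC.vertex,
    h.vertexA.vertex, mul_zero, zero_add, add_zero] at hmC hmA
  exact ⟨-a, -c, neg_ne_zero.2 (left_ne_zero_of_mul hmC), neg_ne_zero.2 (left_ne_zero_of_mul hmA),
    by module⟩

theorem cevian_defect (h : IsReflectiveTriangle l m n A B C X Y Z) :
    2 * l B * l C * (m A * n X - n A * m X) = l X * (m A * n B * l C - n A * l B * m C) := by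
  have hm := h.vertexA.formula m
  have hn := h.vertexA.formula n
  rw [h.vertexB.vertex] at hm
  rw [h.vertexC.vertex] at hn
  linear_combination m A * hn - n A * hm

theorem one_sub_ratios (h : IsReflectiveTriangle l m n A B C X Y Z) :
    1 - n A / m A * (l B / n B) * (m C / l C) =
      2 * (m A * n X - n A * m X) / (l X * m A) * (l B / n B) := by
  have := h.vertexA.field
  have := h.vertexA.right
  have := h.vertexB.right
  have := h.vertexC.right
  field_simp
  linear_combination -h.cevian_defect

theorem cevian_of_ceva [NeZero (2 : 𝕜)] (h : IsReflectiveTriangle l m n A B C X Y Z)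
    (hceva : m A * n B * l C = n A * l B * m C) : m A * n X = n A * m X := by
  have hdefect := h.cevian_defect
  rw [hceva, sub_self, mul_zero] at hdefect
  have hne : 2 * l B * l C ≠ 0 :=
    mul_ne_zero (mul_ne_zero two_ne_zero h.vertexA.left) h.vertexA.right
  exact sub_eq_zero.1 ((mul_eq_zero.1 hdefect).resolve_left hne)

theorem ratio_sub_ratio (h : IsReflectiveTriangle l m n A B C X Y Z) (hsum : l + m + n = 0)
    (θ : Dual 𝕜 E) :
    θ C / l C - θ B / n B = 2 * θ X / l X - θ A / m A * (2 * m X / l X + 1) := by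
  have hsum' (x : E) : n x = -l x - m x := by
    have hx : l x + m x + n x = 0 := LinearMap.congr_fun hsum x
    linear_combination hx
  have hnB : n B = -l B := by rw [hsum', h.vertexB.vertex, sub_zero]
  have hmC : m C = -l C := by linear_combination hsum' C - h.vertexC.vertex
  have hm := h.vertexA.formula m
  have hθ := h.vertexA.formula θ
  rw [h.vertexB.vertex, hmC] at hm
  have := h.vertexA.left
  have := h.vertexA.right
  have := h.vertexA.field
  have := h.vertexB.right
  rw [hnB]
  field_simp
  linear_combination θ A * hm - m A * hθ

end IsReflectiveTriangle

/-- The frame `P`, `Q`, `R` exhibits an orbit `A B C` with field vectors `X`, `Y`, `Z` as an orbit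
of a right-spherical billiard: the vertices lie on the sides of the triangle `P Q R`, and each field
line passes through the opposite vertex. -/
def IsRightSphericalAt (𝕜 : Type*) {E : Type*} [Field 𝕜] [AddCommGroup E] [Module 𝕜 E]
    (P Q R A B C X Y Z : E) : Prop :=
  A ∈ Submodule.span 𝕜 {P, Q} ∧ B ∈ Submodule.span 𝕜 {Q, R} ∧ C ∈ Submodule.span 𝕜 {R, P} ∧
    R ∈ Submodule.span 𝕜 {A, X} ∧ P ∈ Submodule.span 𝕜 {B, Y} ∧ Q ∈ Submodule.span 𝕜 {C, Z}

theorem mem_span_side {l m n : Dual 𝕜 E} {P Q R : E}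
    (hframe : ∀ x, m x • P + n x • Q + l x • R = x) {A : E} (hA : l A = 0) :
    A ∈ Submodule.span 𝕜 {P, Q} := by
  have hx := hframe A
  rw [hA, zero_smul, add_zero] at hx
  exact Submodule.mem_span_pair.2 ⟨m A, n A, hx⟩

theorem opposite_vertex_mem_span {l m n : Dual 𝕜 E} {P Q R : E}
    (hframe : ∀ x, m x • P + n x • Q + l x • R = x) {A X : E} (hA : l A = 0) (hmA : m A ≠ 0)
    (hX : l X ≠ 0) (hcevian : m A * n X = n A * m X) : R ∈ Submodule.span 𝕜 {A, X} := by
  have hR : (m A * l X) • R = (-m X) • A + m A • X := by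
    calc (m A * l X) • R
        = (-m X) • (m A • P + n A • Q + l A • R) + m A • (m X • P + n X • Q + l X • R)
            - (m A * n X - n A * m X) • Q + (m X * l A) • R := by module
      _ = (-m X) • A + m A • X := by
          rw [hframe, hframe, hcevian, hA, sub_self, mul_zero, zero_smul, zero_smul, sub_zero,
            add_zero]
  rw [← Submodule.smul_mem_iff _ (mul_ne_zero hmA hX), hR]
  exact Submodule.mem_span_pair.2 ⟨_, _, rfl⟩

theorem IsReflectiveTriangle.isRightSphericalAt [NeZero (2 : 𝕜)] {l m n : Dual 𝕜 E}
    {A B C X Y Z P Q R : E} (h : IsReflectiveTriangle l m n A B C X Y Z)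
    (hframe : ∀ x, m x • P + n x • Q + l x • R = x)
    (hceva : m A * n B * l C = n A * l B * m C) : IsRightSphericalAt 𝕜 P Q R A B C X Y Z := by
  have hframe' (x : E) : n x • Q + l x • R + m x • P = x := by
    rw [← add_rotate, hframe]
  have hframe'' (x : E) : l x • R + m x • P + n x • Q = x := by
    rw [← add_rotate, hframe']
  have hX := h.cevian_of_ceva hceva
  have hY := h.rotate.cevian_of_ceva (by linear_combination hceva)
  have hZ := h.rotate.rotate.cevian_of_ceva (by linear_combination hceva)
  obtain ⟨hA, hB, hC⟩ := h
  exact ⟨mem_span_side hframe hA.vertex, mem_span_side hframe' hB.vertex,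
    mem_span_side hframe'' hC.vertex,
    opposite_vertex_mem_span hframe hA.vertex hB.right hA.field hX,
    opposite_vertex_mem_span hframe' hB.vertex hC.right hB.field hY,
    opposite_vertex_mem_span hframe'' hC.vertex hA.right hC.field hZ⟩

end ReflectiveTriangles

section NonconcurrentBorders

variable {𝕜 E S T : Type*} [Field 𝕜] [AddCommGroup E] [Module 𝕜 E]

theorem mul_mul_eq_one_of_functional_equation {α μ : S → 𝕜} {β ν : T → 𝕜} {γ : S → T → 𝕜}
    (hα : ∀ s, α s ≠ 0) (hβ : ∀ t, β t ≠ 0)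
    (hμ : ∀ s t, 1 - α s * β t * γ s t = μ s * β t)
    (hν : ∀ s t, 1 - α s * β t * γ s t = ν t * γ s t)
    {s₁ s₂ : S} (hs : α s₁ ≠ α s₂) {t₁ t₂ : T} (ht : β t₁ ≠ β t₂) (s : S) (t : T) :
    α s * β t * γ s t = 1 := by
  suffices hμs : μ s = 0 by
    have h := hμ s t
    rw [hμs, zero_mul] at h
    exact (sub_eq_zero.1 h).symm
  by_contra hμs
  have hγ_elim (s : S) (t : T) : ν t * (1 - μ s * β t) = μ s * α s * β t ^ 2 := by
    linear_combination (ν t + α s * β t) * hμ s t - α s * β t * hν s t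
  have hν0 (t : T) : ν t ≠ 0 := by
    intro h
    have h0 := hγ_elim s t
    rw [h, zero_mul] at h0
    exact mul_ne_zero (mul_ne_zero hμs (hα s)) (pow_ne_zero 2 (hβ t)) h0.symm
  have hμ0 (s : S) : μ s ≠ 0 := by
    intro h
    have h0 := hγ_elim s t
    rw [h] at h0
    exact hν0 t (by linear_combination h0)
  have hseparated (s : S) (t : T) : (μ s)⁻¹ - β t = α s * (β t ^ 2 / ν t) := by
    have := hν0 t
    have := hμ0 s
    field_simp
    linear_combination hγ_elim s t
  -- The left side of `hseparated` is separated additively, its right side multiplicatively.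
  have hquot : β t₁ ^ 2 / ν t₁ = β t₂ ^ 2 / ν t₂ := by
    apply mul_left_cancel₀ (sub_ne_zero.2 hs)
    linear_combination hseparated s₁ t₂ - hseparated s₁ t₁ + hseparated s₂ t₁ - hseparated s₂ t₂
  have h₁ := hseparated s₁ t₁
  rw [hquot] at h₁
  exact ht (by linear_combination hseparated s₁ t₂ - h₁)

theorem ceva_of_reflective_family [Nontrivial S] [Nontrivial T] {l m n : Dual 𝕜 E}
    (hsep : ∀ x, l x = 0 → m x = 0 → n x = 0 → x = 0)
    {A X : S → E} {B Y : T → E} {C Z : S → T → E}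
    (hA : Pairwise fun s s' => LinearIndependent 𝕜 ![A s, A s'])
    (hB : Pairwise fun t t' => LinearIndependent 𝕜 ![B t, B t'])
    (h : ∀ s t, IsReflectiveTriangle l m n (A s) (B t) (C s t) (X s) (Y t) (Z s t))
    (s : S) (t : T) : m (A s) * n (B t) * l (C s t) = n (A s) * l (B t) * m (C s t) := by
  obtain ⟨s₁, s₂, hs⟩ := exists_pair_ne S
  obtain ⟨t₁, t₂, ht⟩ := exists_pair_ne T
  have hα : n (A s₁) / m (A s₁) ≠ n (A s₂) / m (A s₂) :=
    div_ne_div_of_linearIndependent hsep (hA hs) (h s₁ t).vertexA.vertex (h s₂ t).vertexA.vertex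
      (h s₁ t).vertexB.right (h s₂ t).vertexB.right
  have hβ : l (B t₁) / n (B t₁) ≠ l (B t₂) / n (B t₂) :=
    div_ne_div_of_linearIndependent (fun x hm hn hl => hsep x hl hm hn) (hB ht)
      (h s t₁).vertexB.vertex (h s t₂).vertexB.vertex (h s t₁).vertexC.right
      (h s t₂).vertexC.right
  have hratios : n (A s) / m (A s) * (l (B t) / n (B t)) * (m (C s t) / l (C s t)) = 1 :=
    mul_mul_eq_one_of_functional_equation
      (α := fun s => n (A s) / m (A s)) (β := fun t => l (B t) / n (B t))
      (γ := fun s t => m (C s t) / l (C s t))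
      (ν := fun t => 2 * (n (B t) * l (Y t) - l (B t) * n (Y t)) / (m (Y t) * n (B t)))
      (fun s => div_ne_zero (h s t).vertexC.left (h s t).vertexB.right)
      (fun t => div_ne_zero (h s t).vertexA.left (h s t).vertexC.right)
      (fun s t => (h s t).one_sub_ratios)
      (fun s t => by linear_combination (h s t).rotate.one_sub_ratios) hα hβ s t
  have := (h s t).vertexB.right
  have := (h s t).vertexC.right
  have := (h s t).vertexA.right
  field_simp at hratios
  linear_combination -hratios

end NonconcurrentBorders

section ConcurrentBorders

variable {S T W : Type*} [TopologicalSpace S] [TopologicalSpace T]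

variable {E : Type*} [AddCommGroup E] [Module ℝ E] [TopologicalSpace E] [IsTopologicalAddGroup E]
  [ContinuousSMul ℝ E] [T2Space E]

theorem continuous_form_div_form [FiniteDimensional ℝ E] (f : Dual ℝ E) {g : Dual ℝ E}
    {A : S → E} (hA : Continuous A) (hg : ∀ s, g (A s) ≠ 0) :
    Continuous fun s => f (A s) / g (A s) :=
  (f.continuous_of_finiteDimensional.comp hA).div (g.continuous_of_finiteDimensional.comp hA) hg

variable [PreconnectedSpace S] [PreconnectedSpace T]

theorem exists_add_eq_add_and_sub_ne_sub {ξ : S → ℝ} {η : T → ℝ} (hξ : Continuous ξ)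
    (hη : Continuous η) {s₁ s₂ : S} (hs : ξ s₁ ≠ ξ s₂) {t₁ t₂ : T} (ht : η t₁ ≠ η t₂) :
    ∃ s s' t t', ξ s + η t = ξ s' + η t' ∧ η t - ξ s ≠ η t' - ξ s' := by
  wlog hs_lt : ξ s₁ < ξ s₂ generalizing s₁ s₂
  · exact this hs.symm (lt_of_le_of_ne (not_lt.1 hs_lt) hs.symm)
  wlog ht_lt : η t₁ < η t₂ generalizing t₁ t₂
  · exact this ht.symm (lt_of_le_of_ne (not_lt.1 ht_lt) ht.symm)
  obtain ⟨δ, hδ, hδ_le⟩ := exists_between (lt_min (sub_pos.2 hs_lt) (sub_pos.2 ht_lt))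
  obtain ⟨hδξ, hδη⟩ := lt_min_iff.1 hδ_le
  obtain ⟨s, hs⟩ : ξ s₁ + δ ∈ Set.range ξ :=
    intermediate_value_univ s₁ s₂ hξ ⟨by linarith, by linarith⟩
  obtain ⟨t, ht⟩ : η t₁ + δ ∈ Set.range η :=
    intermediate_value_univ t₁ t₂ hη ⟨by linarith, by linarith⟩
  exact ⟨s₁, s, t, t₁, by linarith, by linarith⟩

theorem false_of_cyclic_differences {ξ N : S → ℝ} {η M : T → ℝ} {ζ : S → T → ℝ}
    (hξ : Continuous ξ) (hη : Continuous η)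
    (hN : ∀ s t, ζ s t - η t = N s) (hM : ∀ s t, ξ s - ζ s t = M t)
    (hK : ∀ s t s' t', ζ s t = ζ s' t' → η t - ξ s = η t' - ξ s')
    {s₁ s₂ : S} (hs : ξ s₁ ≠ ξ s₂) {t₁ t₂ : T} (ht : η t₁ ≠ η t₂) : False := by
  obtain ⟨s, s', t, t', hsum, hdiff⟩ := exists_add_eq_add_and_sub_ne_sub hξ hη hs ht
  refine hdiff (hK s t s' t' ?_)
  linear_combination hN s t - hN s t' + hM s' t' - hM s t' + hsum

theorem not_reflective_family_of_add_add_eq_zero [FiniteDimensional ℝ E] [Nontrivial S]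
    [Nontrivial T] {l m n θ : Dual ℝ E} (hsum : l + m + n = 0)
    (hsep : ∀ x, l x = 0 → m x = 0 → θ x = 0 → x = 0)
    {A X : S → E} {B Y : T → E} {C Z : W → E} {g : S → T → W}
    (hAc : Continuous A) (hBc : Continuous B)
    (hA : Pairwise fun s s' => LinearIndependent ℝ ![A s, A s'])
    (hB : Pairwise fun t t' => LinearIndependent ℝ ![B t, B t'])
    (hC : Pairwise fun w w' => LinearIndependent ℝ ![C w, C w']) :
    ¬ ∀ s t, IsReflectiveTriangle l m n (A s) (B t) (C (g s t)) (X s) (Y t) (Z (g s t)) := by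
  intro h
  have hsum_apply (x : E) : l x + m x + n x = 0 := LinearMap.congr_fun hsum x
  have hsum' : m + n + l = 0 := by rw [← hsum]; abel
  have hsum'' : n + l + m = 0 := by rw [← hsum]; abel
  obtain ⟨s₁, s₂, hs⟩ := exists_pair_ne S
  obtain ⟨t₁, t₂, ht⟩ := exists_pair_ne T
  have hξ : θ (A s₁) / m (A s₁) ≠ θ (A s₂) / m (A s₂) :=
    div_ne_div_of_linearIndependent hsep (hA hs) (h s₁ t₁).vertexA.vertex
      (h s₂ t₁).vertexA.vertex (h s₁ t₁).vertexB.right (h s₂ t₁).vertexB.right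
  have hη : θ (B t₁) / n (B t₁) ≠ θ (B t₂) / n (B t₂) :=
    div_ne_div_of_linearIndependent
      (fun x hm hn => hsep x (by linear_combination hsum_apply x - hm - hn) hm) (hB ht)
      (h s₁ t₁).vertexB.vertex (h s₁ t₂).vertexB.vertex (h s₁ t₁).vertexC.right
      (h s₁ t₂).vertexC.right
  refine false_of_cyclic_differences (ξ := fun s => θ (A s) / m (A s))
    (η := fun t => θ (B t) / n (B t)) (ζ := fun s t => θ (C (g s t)) / l (C (g s t)))
    (continuous_form_div_form θ hAc fun s => (h s t₁).vertexB.right)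
    (continuous_form_div_form θ hBc fun t => (h s₁ t).vertexC.right)
    (fun s t => (h s t).ratio_sub_ratio hsum θ)
    (fun s t => (h s t).rotate.ratio_sub_ratio hsum' θ) (fun s t s' t' hζ => ?_) hξ hη
  have hg : g s t = g s' t' := by
    by_contra hne
    exact div_ne_div_of_linearIndependent
      (fun x hn hl => hsep x hl (by linear_combination hsum_apply x - hn - hl)) (hC hne)
      (h s t).vertexC.vertex (h s' t').vertexC.vertex (h s t).vertexA.right
      (h s' t').vertexA.right hζ
  have hK := (h s t).rotate.rotate.ratio_sub_ratio hsum'' θ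
  have hK' := (h s' t').rotate.rotate.ratio_sub_ratio hsum'' θ
  rw [hg] at hK
  exact hK.trans hK'.symm

end ConcurrentBorders

theorem exists_isRightSphericalAt_of_reflective_family {E S T W : Type*} [AddCommGroup E]
    [Module ℝ E] [TopologicalSpace E] [IsTopologicalAddGroup E] [ContinuousSMul ℝ E] [T2Space E]
    [TopologicalSpace S] [PreconnectedSpace S] [Nontrivial S]
    [TopologicalSpace T] [PreconnectedSpace T] [Nontrivial T]
    (hE : finrank ℝ E = 3) {l m n : Dual ℝ E} {A X : S → E} {B Y : T → E} {C Z : W → E}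
    {g : S → T → W} (hAc : Continuous A) (hBc : Continuous B)
    (hA : Pairwise fun s s' => LinearIndependent ℝ ![A s, A s'])
    (hB : Pairwise fun t t' => LinearIndependent ℝ ![B t, B t'])
    (hC : Pairwise fun w w' => LinearIndependent ℝ ![C w, C w'])
    (h : ∀ s t, IsReflectiveTriangle l m n (A s) (B t) (C (g s t)) (X s) (Y t) (Z (g s t))) :
    ∃ P Q R : E, LinearIndependent ℝ ![P, Q, R] ∧ ∀ s t,
      IsRightSphericalAt ℝ P Q R (A s) (B t) (C (g s t)) (X s) (Y t) (Z (g s t)) := by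
  have : FiniteDimensional ℝ E := .of_finrank_pos (by omega)
  by_cases hli : LinearIndependent ℝ ![m, n, l]
  · obtain ⟨P, Q, R, hPQR, hframe⟩ := exists_dual_frame hli hE
    have hsep (x : E) (hl : l x = 0) (hm : m x = 0) (hn : n x = 0) : x = 0 := by
      rw [← hframe x, hl, hm, hn]
      module
    exact ⟨P, Q, R, hPQR, fun s t =>
      (h s t).isRightSphericalAt hframe (ceva_of_reflective_family hsep hA hB h s t)⟩
  · obtain ⟨s⟩ := (inferInstance : Nonempty S)
    obtain ⟨t⟩ := (inferInstance : Nonempty T)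
    obtain ⟨a, c, ha, hc, hsum⟩ := (h s t).exists_smul_add_add_smul_eq_zero hli
    have hscaled (s : S) (t : T) := (h s t).smul ha one_ne_zero hc
    have hlm := linearIndependent_pair_of_apply (hscaled s t).vertexA.vertex
      (hscaled s t).vertexB.right (hscaled s t).vertexB.vertex (hscaled s t).vertexA.left
    obtain ⟨θ, hθ⟩ := exists_separating_form hlm hE
    exact (not_reflective_family_of_add_add_eq_zero (by rwa [one_smul]) hθ hAc hBc hA hB hC
      hscaled).elim

section HomogeneousCoordinates

variable {𝕜 : Type*} [Field 𝕜]

/-- An equation of the line through `x` with direction `w`, as a linear form in the homogeneous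
coordinates of `liftPt` and `liftDir`. It is zero for `w = 0`. -/
def lineForm (x w : 𝕜 × 𝕜) : Dual 𝕜 (𝕜 × 𝕜 × 𝕜) where
  toFun z := w.2 * (z.1 - x.1 * z.2.2) - w.1 * (z.2.1 - x.2 * z.2.2)
  map_add' y z := by simp only [Prod.fst_add, Prod.snd_add]; ring
  map_smul' c z := by simp only [Prod.smul_fst, Prod.smul_snd, smul_eq_mul, RingHom.id_apply]; ring

theorem lineForm_liftPt {x w y : 𝕜 × 𝕜} (hy : y ∈ lineThru 𝕜 x w) :
    lineForm x w (liftPt 𝕜 y) = 0 := by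
  obtain ⟨c, rfl⟩ := hy
  simp only [lineForm, liftPt, LinearMap.coe_mk, AddHom.coe_mk, Prod.fst_add, Prod.snd_add,
    Prod.smul_fst, Prod.smul_snd, smul_eq_mul]
  ring

theorem lineForm_liftDir_eq_zero_iff (x : 𝕜 × 𝕜) {w d : 𝕜 × 𝕜} (hw : w ≠ 0) :
    lineForm x w (liftDir 𝕜 d) = 0 ↔ d ∈ Submodule.span 𝕜 {w} := by
  have hform : lineForm x w (liftDir 𝕜 d) = w.2 * d.1 - w.1 * d.2 := by
    simp [lineForm, liftDir]
  rw [hform, Submodule.mem_span_singleton]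
  constructor
  · intro h
    by_cases hw₁ : w.1 = 0
    · have hw₂ : w.2 ≠ 0 := fun hw₂ => hw (Prod.ext hw₁ hw₂)
      have hd₁ : d.1 = 0 := by simpa [hw₁, hw₂] using h
      exact ⟨d.2 / w.2, Prod.ext (by simp [hw₁, hd₁]) (div_mul_cancel₀ _ hw₂)⟩
    · refine ⟨d.1 / w.1, Prod.ext (div_mul_cancel₀ _ hw₁) ?_⟩
      rw [Prod.smul_snd, smul_eq_mul, div_mul_eq_mul_div, div_eq_iff hw₁]
      linear_combination h
  · rintro ⟨c, rfl⟩
    simp only [Prod.smul_fst, Prod.smul_snd, smul_eq_mul]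
    ring

theorem liftPt_sub_liftPt (x y : 𝕜 × 𝕜) : liftPt 𝕜 x - liftPt 𝕜 y = liftDir 𝕜 (x - y) := by
  simp [liftPt, liftDir]

theorem liftDir_add (x y : 𝕜 × 𝕜) : liftDir 𝕜 (x + y) = liftDir 𝕜 x + liftDir 𝕜 y := by
  simp [liftDir]

theorem liftDir_sub (x y : 𝕜 × 𝕜) : liftDir 𝕜 (x - y) = liftDir 𝕜 x - liftDir 𝕜 y := by
  simp [liftDir]

theorem liftDir_smul (c : 𝕜) (x : 𝕜 × 𝕜) : liftDir 𝕜 (c • x) = c • liftDir 𝕜 x := by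
  simp [liftDir]

theorem liftDir_mem_span {x y : 𝕜 × 𝕜} (h : x ∈ Submodule.span 𝕜 {y}) :
    liftDir 𝕜 x ∈ Submodule.span 𝕜 {liftDir 𝕜 y} := by
  obtain ⟨c, rfl⟩ := Submodule.mem_span_singleton.1 h
  exact Submodule.mem_span_singleton.2 ⟨c, (liftDir_smul c y).symm⟩

theorem linearIndependent_liftPt {x y : 𝕜 × 𝕜} (hxy : x ≠ y) :
    LinearIndependent 𝕜 ![liftPt 𝕜 x, liftPt 𝕜 y] := by
  refine LinearIndependent.pair_iff.2 fun c d h => ?_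
  simp only [liftPt, Prod.smul_mk, Prod.mk_add_mk, Prod.mk_eq_zero, smul_eq_mul, mul_one] at h
  obtain ⟨h₁, h₂, hcd⟩ := h
  obtain rfl : d = -c := by linear_combination hcd
  have hc : c = 0 := by
    by_contra hc
    exact hxy (Prod.ext (mul_left_cancel₀ hc (by linear_combination h₁))
      (mul_left_cancel₀ hc (by linear_combination h₂)))
  exact ⟨hc, neg_eq_zero.2 hc⟩

theorem reflectsAt_lineForm [NeZero (2 : 𝕜)] {x w A B C v τ : 𝕜 × 𝕜} (hA : A ∈ lineThru 𝕜 x w)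
    (hτw : τ ∈ Submodule.span 𝕜 {w}) (hτ : τ ≠ 0) (hB : B - A ∉ Submodule.span 𝕜 {τ})
    (hsym : PlaneSym 𝕜 v τ (B - A) (C - A)) :
    ReflectsAt (lineForm x w) (liftPt 𝕜 A) (liftPt 𝕜 B) (liftPt 𝕜 C) (liftDir 𝕜 v) := by
  obtain ⟨p, q, hp, -, hadd, hsub⟩ := hsym
  obtain ⟨c, rfl⟩ := Submodule.mem_span_singleton.1 hτw
  obtain ⟨hc, hw⟩ := smul_ne_zero_iff.1 hτ
  rw [Submodule.span_singleton_smul_eq hc.isUnit] at hB hadd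
  have hAB : lineForm x w (liftPt 𝕜 B) = lineForm x w (liftDir 𝕜 (B - A)) := by
    rw [← liftPt_sub_liftPt, map_sub, lineForm_liftPt hA, sub_zero]
  refine .of_harmonic (τ := liftDir 𝕜 w) (lineForm_liftPt hA)
    ((lineForm_liftDir_eq_zero_iff x hw).2 (Submodule.mem_span_singleton_self w))
    (hAB ▸ mt (lineForm_liftDir_eq_zero_iff x hw).1 hB) hp (q := q) ?_ ?_
  · simpa only [liftPt_sub_liftPt, liftDir_add, liftDir_smul] using liftDir_mem_span hadd
  · simpa only [liftPt_sub_liftPt, liftDir_sub, liftDir_smul] using liftDir_mem_span hsub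

end HomogeneousCoordinates

section RealPlane

theorem deriv_mem_span_of_mem_lineThru {x w : ℝ × ℝ} {U : Set ℝ} (hU : IsOpen U) {a : ℝ → ℝ × ℝ}
    (ha : ∀ s ∈ U, a s ∈ lineThru ℝ x w) {s : ℝ} (hs : s ∈ U) :
    deriv a s ∈ Submodule.span ℝ {w} := by
  have hspan : Submodule.span ℝ ((fun r => a r - x) '' U) ≤ Submodule.span ℝ {w} := by
    rw [Submodule.span_le]
    rintro _ ⟨r, hr, rfl⟩
    obtain ⟨c, hc⟩ := ha r hr
    exact Submodule.mem_span_singleton.2 ⟨c, by simp [hc]⟩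
  have hderiv : derivWithin (fun r => a r - x) U s = deriv a s := by
    rw [derivWithin_of_isOpen hU hs, deriv_sub_const]
  rw [← hderiv]
  refine closure_minimal hspan (Submodule.closed_of_finiteDimensional _) ?_
  exact range_derivWithin_subset_closure_span_image _ (by simpa using subset_closure)
    (Set.mem_range_self s)

theorem continuous_liftPt : Continuous (liftPt ℝ) := by
  unfold liftPt
  fun_prop

theorem continuous_liftPt_comp_of_deriv_ne_zero {a : ℝ → ℝ × ℝ} {U : Set ℝ}
    (ha : ∀ s ∈ U, deriv a s ≠ 0) : Continuous fun s : U => liftPt ℝ (a s) := by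
  refine continuous_liftPt.comp (continuousOn_iff_continuous_domRestrict.1 fun s hs => ?_)
  exact (differentiableAt_of_deriv_ne_zero (ha s hs)).continuousAt.continuousWithinAt

theorem pairwise_linearIndependent_liftPt {a : ℝ → ℝ × ℝ} {U : Set ℝ} (ha : Set.InjOn a U) :
    Pairwise fun s s' : U => LinearIndependent ℝ ![liftPt ℝ (a s), liftPt ℝ (a s')] :=
  fun s s' hne => linearIndependent_liftPt fun h => hne (Subtype.ext (ha s.2 s'.2 h))

theorem exists_nontrivial_prod_subset {Ω : Set (ℝ × ℝ)} (hΩ : IsOpen Ω) (hne : Ω.Nonempty) :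
    ∃ I J : Set ℝ, (IsOpen I ∧ IsPreconnected I ∧ I.Nontrivial) ∧
      (IsOpen J ∧ IsPreconnected J ∧ J.Nontrivial) ∧ I ×ˢ J ⊆ Ω := by
  obtain ⟨c, hc⟩ := hne
  obtain ⟨r, hr, hball⟩ := Metric.isOpen_iff.1 hΩ c hc
  have hI (x : ℝ) : IsOpen (Metric.ball x r) ∧ IsPreconnected (Metric.ball x r) ∧
      (Metric.ball x r).Nontrivial :=
    ⟨Metric.isOpen_ball, (convex_ball x r).isPreconnected,
      (infinite_of_mem_nhds x (Metric.ball_mem_nhds x hr)).nontrivial⟩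
  exact ⟨_, _, hI c.1, hI c.2, by rwa [ball_prod_same]⟩

end RealPlane

theorem smooth_three_reflective_on_lines_is_right_spherical_general
    {U₁ U₂ U₃ : Set ℝ} {a₁ a₂ a₃ v₁ v₂ v₃ : ℝ → ℝ × ℝ}
    (hU₁o : IsOpen U₁) (hU₂o : IsOpen U₂) (hU₃o : IsOpen U₃)
    (ha₁i : Set.InjOn a₁ U₁) (ha₂i : Set.InjOn a₂ U₂) (ha₃i : Set.InjOn a₃ U₃)
    (ha₁' : ∀ s ∈ U₁, deriv a₁ s ≠ 0) (ha₂' : ∀ u ∈ U₂, deriv a₂ u ≠ 0)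
    (ha₃' : ∀ t ∈ U₃, deriv a₃ t ≠ 0)
    {x₁ w₁ x₂ w₂ x₃ w₃ : ℝ × ℝ}
    (hl₁ : ∀ s ∈ U₁, a₁ s ∈ lineThru ℝ x₁ w₁)
    (hl₂ : ∀ u ∈ U₂, a₂ u ∈ lineThru ℝ x₂ w₂)
    (hl₃ : ∀ t ∈ U₃, a₃ t ∈ lineThru ℝ x₃ w₃)
    {Ω : Set (ℝ × ℝ)} {g : ℝ × ℝ → ℝ}
    (hΩo : IsOpen Ω) (hΩne : Ω.Nonempty) (hΩ : Ω ⊆ U₁ ×ˢ U₂) (hgm : ∀ z ∈ Ω, g z ∈ U₃)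
    (htan₁ : ∀ z ∈ Ω, a₂ z.2 - a₁ z.1 ∉ Submodule.span ℝ {deriv a₁ z.1})
    (htan₂ : ∀ z ∈ Ω, a₁ z.1 - a₂ z.2 ∉ Submodule.span ℝ {deriv a₂ z.2})
    (htan₃ : ∀ z ∈ Ω, a₁ z.1 - a₃ (g z) ∉ Submodule.span ℝ {deriv a₃ (g z)})
    (href₁ : ∀ z ∈ Ω,
      PlaneSym ℝ (v₁ z.1) (deriv a₁ z.1) (a₂ z.2 - a₁ z.1) (a₃ (g z) - a₁ z.1))
    (href₂ : ∀ z ∈ Ω,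
      PlaneSym ℝ (v₂ z.2) (deriv a₂ z.2) (a₁ z.1 - a₂ z.2) (a₃ (g z) - a₂ z.2))
    (href₃ : ∀ z ∈ Ω,
      PlaneSym ℝ (v₃ (g z)) (deriv a₃ (g z)) (a₁ z.1 - a₃ (g z)) (a₂ z.2 - a₃ (g z))) :
    ∃ P Q R : ℝ × ℝ × ℝ, LinearIndependent ℝ ![P, Q, R] ∧
      ∃ Ω' : Set (ℝ × ℝ), Ω' ⊆ Ω ∧ Ω'.Nonempty ∧ IsOpen Ω' ∧
        ∀ z ∈ Ω', IsRightSphericalAt ℝ P Q R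
          (liftPt ℝ (a₁ z.1)) (liftPt ℝ (a₂ z.2)) (liftPt ℝ (a₃ (g z)))
          (liftDir ℝ (v₁ z.1)) (liftDir ℝ (v₂ z.2)) (liftDir ℝ (v₃ (g z))) := by
  have htriangle (z : ℝ × ℝ) (hz : z ∈ Ω) :
      IsReflectiveTriangle (lineForm x₁ w₁) (lineForm x₂ w₂) (lineForm x₃ w₃)
        (liftPt ℝ (a₁ z.1)) (liftPt ℝ (a₂ z.2)) (liftPt ℝ (a₃ (g z)))
        (liftDir ℝ (v₁ z.1)) (liftDir ℝ (v₂ z.2)) (liftDir ℝ (v₃ (g z))) := by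
    obtain ⟨hs, hu⟩ := hΩ hz
    have ht := hgm z hz
    exact ⟨reflectsAt_lineForm (hl₁ _ hs) (deriv_mem_span_of_mem_lineThru hU₁o hl₁ hs)
        (ha₁' _ hs) (htan₁ z hz) (href₁ z hz),
      (reflectsAt_lineForm (hl₂ _ hu) (deriv_mem_span_of_mem_lineThru hU₂o hl₂ hu)
        (ha₂' _ hu) (htan₂ z hz) (href₂ z hz)).symm,
      reflectsAt_lineForm (hl₃ _ ht) (deriv_mem_span_of_mem_lineThru hU₃o hl₃ ht)
        (ha₃' _ ht) (htan₃ z hz) (href₃ z hz)⟩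
  obtain ⟨I, J, ⟨hIo, hIc, hI⟩, ⟨hJo, hJc, hJ⟩, hIJ⟩ := exists_nontrivial_prod_subset hΩo hΩne
  have hIU : I ⊆ U₁ := fun s hs => (hΩ (hIJ (Set.mk_mem_prod hs hJ.nonempty.some_mem))).1
  have hJU : J ⊆ U₂ := fun u hu => (hΩ (hIJ (Set.mk_mem_prod hI.nonempty.some_mem hu))).2
  have := hI.coe_sort
  have := hJ.coe_sort
  have := isPreconnected_iff_preconnectedSpace.1 hIc
  have := isPreconnected_iff_preconnectedSpace.1 hJc
  obtain ⟨P, Q, R, hPQR, hspherical⟩ := exists_isRightSphericalAt_of_reflective_family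
    (A := fun s : I => liftPt ℝ (a₁ s)) (B := fun u : J => liftPt ℝ (a₂ u))
    (C := fun t : U₃ => liftPt ℝ (a₃ t)) (X := fun s => liftDir ℝ (v₁ s))
    (Y := fun u => liftDir ℝ (v₂ u)) (Z := fun t => liftDir ℝ (v₃ t))
    (g := fun s u => ⟨g (s, u), hgm _ (hIJ ⟨s.2, u.2⟩)⟩) (by simp)
    (continuous_liftPt_comp_of_deriv_ne_zero fun s hs => ha₁' s (hIU hs))
    (continuous_liftPt_comp_of_deriv_ne_zero fun u hu => ha₂' u (hJU hu))
    (pairwise_linearIndependent_liftPt (ha₁i.mono hIU))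
    (pairwise_linearIndependent_liftPt (ha₂i.mono hJU)) (pairwise_linearIndependent_liftPt ha₃i)
    fun s u => htriangle (s, u) (hIJ ⟨s.2, u.2⟩)
  exact ⟨P, Q, R, hPQR, I ×ˢ J, hIJ, hI.nonempty.prod hJ.nonempty, hIo.prod hJo,
    fun z hz => hspherical ⟨z.1, hz.1⟩ ⟨z.2, hz.2⟩⟩

/-- **Lemma from the proof of Theorem 1.1.** A 3-reflective triple of `C^∞`-smooth
line-framed curves in `ℝ²` whose classical borders are supported by pairwise distinct
lines is right-spherical near its orbits. -/
theorem smooth_three_reflective_on_lines_is_right_spherical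
    (U₁ U₂ U₃ : Set ℝ) (a₁ a₂ a₃ v₁ v₂ v₃ : ℝ → ℝ × ℝ)
    (hU₁o : IsOpen U₁) (hU₂o : IsOpen U₂) (hU₃o : IsOpen U₃)
    (hU₁c : IsConnected U₁) (hU₂c : IsConnected U₂) (hU₃c : IsConnected U₃)
    -- the `(aᵢ, vᵢ)` are smooth line-framed curves
    (ha₁ : ContDiffOn ℝ (⊤ : ℕ∞) a₁ U₁) (ha₂ : ContDiffOn ℝ (⊤ : ℕ∞) a₂ U₂)
    (ha₃ : ContDiffOn ℝ (⊤ : ℕ∞) a₃ U₃)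
    (ha₁i : Set.InjOn a₁ U₁) (ha₂i : Set.InjOn a₂ U₂) (ha₃i : Set.InjOn a₃ U₃)
    (ha₁' : ∀ s ∈ U₁, deriv a₁ s ≠ 0) (ha₂' : ∀ u ∈ U₂, deriv a₂ u ≠ 0)
    (ha₃' : ∀ t ∈ U₃, deriv a₃ t ≠ 0)
    (hv₁ : ContDiffOn ℝ (⊤ : ℕ∞) v₁ U₁) (hv₂ : ContDiffOn ℝ (⊤ : ℕ∞) v₂ U₂)
    (hv₃ : ContDiffOn ℝ (⊤ : ℕ∞) v₃ U₃)
    (hv₁t : ∀ s ∈ U₁, v₁ s ∉ Submodule.span ℝ {deriv a₁ s})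
    (hv₂t : ∀ u ∈ U₂, v₂ u ∉ Submodule.span ℝ {deriv a₂ u})
    (hv₃t : ∀ t ∈ U₃, v₃ t ∉ Submodule.span ℝ {deriv a₃ t})
    -- the classical borders are supported by pairwise distinct lines ℓ₁, ℓ₂, ℓ₃
    (x₁ w₁ x₂ w₂ x₃ w₃ : ℝ × ℝ)
    (hw₁ : w₁ ≠ 0) (hw₂ : w₂ ≠ 0) (hw₃ : w₃ ≠ 0)
    (hl₁ : ∀ s ∈ U₁, a₁ s ∈ lineThru ℝ x₁ w₁)
    (hl₂ : ∀ u ∈ U₂, a₂ u ∈ lineThru ℝ x₂ w₂)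
    (hl₃ : ∀ t ∈ U₃, a₃ t ∈ lineThru ℝ x₃ w₃)
    (hl₁₂ : lineThru ℝ x₁ w₁ ≠ lineThru ℝ x₂ w₂)
    (hl₂₃ : lineThru ℝ x₂ w₂ ≠ lineThru ℝ x₃ w₃)
    (hl₃₁ : lineThru ℝ x₃ w₃ ≠ lineThru ℝ x₁ w₁)
    -- 3-reflectivity data (Ω, g)
    (Ω : Set (ℝ × ℝ)) (g : ℝ × ℝ → ℝ)
    (hΩo : IsOpen Ω) (hΩne : Ω.Nonempty) (hΩ : Ω ⊆ U₁ ×ˢ U₂)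
    (hg : ContinuousOn g Ω) (hgm : ∀ z ∈ Ω, g z ∈ U₃)
    (hcol : ∀ z ∈ Ω, ¬ Collinear ℝ {a₁ z.1, a₂ z.2, a₃ (g z)})
    (htan₁ : ∀ z ∈ Ω, a₂ z.2 - a₁ z.1 ∉ Submodule.span ℝ {deriv a₁ z.1} ∧
      a₃ (g z) - a₁ z.1 ∉ Submodule.span ℝ {deriv a₁ z.1})
    (htan₂ : ∀ z ∈ Ω, a₁ z.1 - a₂ z.2 ∉ Submodule.span ℝ {deriv a₂ z.2} ∧
      a₃ (g z) - a₂ z.2 ∉ Submodule.span ℝ {deriv a₂ z.2})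
    (htan₃ : ∀ z ∈ Ω, a₁ z.1 - a₃ (g z) ∉ Submodule.span ℝ {deriv a₃ (g z)} ∧
      a₂ z.2 - a₃ (g z) ∉ Submodule.span ℝ {deriv a₃ (g z)})
    (href₁ : ∀ z ∈ Ω,
      PlaneSym ℝ (v₁ z.1) (deriv a₁ z.1) (a₂ z.2 - a₁ z.1) (a₃ (g z) - a₁ z.1))
    (href₂ : ∀ z ∈ Ω,
      PlaneSym ℝ (v₂ z.2) (deriv a₂ z.2) (a₁ z.1 - a₂ z.2) (a₃ (g z) - a₂ z.2))
    (href₃ : ∀ z ∈ Ω,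
      PlaneSym ℝ (v₃ (g z)) (deriv a₃ (g z)) (a₁ z.1 - a₃ (g z)) (a₂ z.2 - a₃ (g z))) :
    ∃ P Q R : ℝ × ℝ × ℝ, LinearIndependent ℝ ![P, Q, R] ∧
      ∃ Ω' : Set (ℝ × ℝ), Ω' ⊆ Ω ∧ Ω'.Nonempty ∧ IsOpen Ω' ∧
        ∀ z ∈ Ω',
          liftPt ℝ (a₁ z.1) ∈ Submodule.span ℝ {P, Q} ∧
          liftPt ℝ (a₂ z.2) ∈ Submodule.span ℝ {Q, R} ∧
          liftPt ℝ (a₃ (g z)) ∈ Submodule.span ℝ {R, P} ∧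
          R ∈ Submodule.span ℝ {liftPt ℝ (a₁ z.1), liftDir ℝ (v₁ z.1)} ∧
          P ∈ Submodule.span ℝ {liftPt ℝ (a₂ z.2), liftDir ℝ (v₂ z.2)} ∧
          Q ∈ Submodule.span ℝ {liftPt ℝ (a₃ (g z)), liftDir ℝ (v₃ (g z))} := by
  exact smooth_three_reflective_on_lines_is_right_spherical_general hU₁o hU₂o hU₃o ha₁i ha₂i ha₃i
    ha₁' ha₂' ha₃' hl₁ hl₂ hl₃ hΩo hΩne hΩ hgm (fun z hz => (htan₁ z hz).1)
    (fun z hz => (htan₂ z hz).1) (fun z hz => (htan₃ z hz).1) href₁ href₂ href₃
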